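/- arXiv:1901.08446 — 3 statements merged into one kernel-verified Lean document; each statement's English description precedes it below -/
import Mathlib

section
/- Let L/K be a finite Galois extension of fields of characteristic p > 0 whose Galois group G is elementary abelian, and let σ_1, …, σ_n be elements of G forming an F_p-basis of G. Suppose y ∈ L and w_1, …, w_n ∈ K satisfy σ_j(y) = y + w_j for j = 1, …, n, and let W ⊆ K be the F_p-span of w_1, …, w_n. Then the element P_W(y) = ∏_{a ∈ W} (y − a) is fixed by every element of Gal(L/K); in particular P_W(y) ∈ K. -/
/-- Let `L/K` be a finite Galois extension of fields of characteristic
`p > 0` whose Galois group is elementary abelian with `𝔽_p`-basis `σ₁, …, σₙ`.  If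
`y ∈ L` and `w₁, …, wₙ ∈ K` satisfy `σⱼ(y) = y + wⱼ`, and `W ⊆ K` is the `𝔽_p`-span of
the `wⱼ`, then `P_W(y) = ∏_{a ∈ W} (y - a)` is fixed by every element of `Gal(L/K)`;
in particular it lies in `K`. -/
theorem subspace_polynomial_value_is_invariant
    (p : ℕ) [Fact p.Prime]
    (K L : Type*) [Field K] [Field L] [Algebra K L]
    [CharP K p] [CharP L p] [Module (ZMod p) K]
    [FiniteDimensional K L] [IsGalois K L]
    (n : ℕ) (σ : Fin n → (L ≃ₐ[K] L))
    -- the Galois group is elementary abelian …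
    (hcomm : ∀ g h : L ≃ₐ[K] L, g * h = h * g)
    (helem : ∀ g : L ≃ₐ[K] L, g ^ p = 1)
    -- … and `σ₁, …, σₙ` form an `𝔽_p`-basis of it
    (hbasis : Function.Bijective
      (fun ν : Fin n → ZMod p => (List.ofFn fun j => σ j ^ (ν j).val).prod))
    (y : L) (w : Fin n → K)
    (hy : ∀ j, σ j y = y + algebraMap K L (w j))
    (hW : (Submodule.span (ZMod p) (Set.range w) : Set K).Finite) :
    (∀ g : L ≃ₐ[K] L,
        g (∏ a ∈ hW.toFinset, (y - algebraMap K L a))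
          = ∏ a ∈ hW.toFinset, (y - algebraMap K L a)) ∧
    (∏ a ∈ hW.toFinset, (y - algebraMap K L a)) ∈ Set.range (algebraMap K L) := by
  set P := ∏ a ∈ hW.toFinset, (y - algebraMap K L a) with hP
  have hfix : ∀ j, σ j P = P := by
    intro j
    have hmem : w j ∈ Submodule.span (ZMod p) (Set.range w) :=
      Submodule.subset_span ⟨j, rfl⟩
    rw [hP, map_prod]
    refine Finset.prod_bij' (fun a _ => a - w j) (fun a _ => a + w j) ?_ ?_ ?_ ?_ ?_
    · intro a ha
      rw [Set.Finite.mem_toFinset] at ha ⊢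
      exact Submodule.sub_mem _ ha hmem
    · intro a ha
      rw [Set.Finite.mem_toFinset] at ha ⊢
      exact Submodule.add_mem _ ha hmem
    · intro a _
      simp
    · intro a _
      simp
    · intro a _
      rw [map_sub, hy, AlgEquiv.commutes, map_sub]
      ring
  have hall : ∀ g : L ≃ₐ[K] L, g P = P := by
    intro g
    obtain ⟨ν, rfl⟩ := hbasis.2 g
    have h : (List.ofFn fun j => σ j ^ (ν j).val).prod ∈
        MulAction.stabilizer (L ≃ₐ[K] L) P := by
      apply Subgroup.list_prod_mem
      intro x hx
      rw [List.mem_ofFn] at hx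
      obtain ⟨j, rfl⟩ := hx
      exact Subgroup.pow_mem _ (MulAction.mem_stabilizer_iff.2 (hfix j)) _
    exact MulAction.mem_stabilizer_iff.1 h
  exact ⟨hall, (IsGalois.mem_range_algebraMap_iff_fixed P).2 hall⟩
end

section
/- Let L/K be a finite Galois extension of fields of characteristic p > 0 whose Galois group G is elementary abelian of order p^n, with σ_1, …, σ_n an F_p-basis of G. Suppose y ∈ L and w_1, …, w_n ∈ K are linearly independent over F_p and satisfy σ_j(y) = y + w_j for all j, and let W be the F_p-span of w_1, …, w_n. Then the monic polynomial A(X) = ∏_{a ∈ W} (X − a) − ∏_{a ∈ W} (y − a) has coefficients in K, has degree p^n = [L : K], is the minimal polynomial of y over K, and L = K(y). -/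
open Polynomial

theorem aux_pow {K L : Type*} [Field K] [Field L] [Algebra K L] (s : L ≃ₐ[K] L) (y : L) (a : K)
    (h : s y = y + algebraMap K L a) (m : ℕ) :
    (s ^ m) y = y + algebraMap K L (m • a) := by
  induction m with
  | zero => simp
  | succ k ih =>
    rw [pow_succ', AlgEquiv.mul_apply, ih, map_add, h, AlgEquiv.commutes, succ_nsmul, map_add]
    ring

theorem aux_list {K L : Type*} [Field K] [Field L] [Algebra K L] (y : L) :
    ∀ (n : ℕ) (s : Fin n → (L ≃ₐ[K] L)) (a : Fin n → K)
    (_ : ∀ j, s j y = y + algebraMap K L (a j)),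
    (List.ofFn s).prod y = y + algebraMap K L (∑ j, a j) := by
  intro n
  induction n with
  | zero => intro s a h; simp
  | succ n ih =>
    intro s a h
    rw [List.ofFn_succ, List.prod_cons, AlgEquiv.mul_apply,
      ih (fun i => s i.succ) (fun i => a i.succ) (fun j => h j.succ), map_add, h,
      AlgEquiv.commutes, Fin.sum_univ_succ, map_add]
    ring

/-- Let `L/K` be a finite Galois extension of fields of characteristic
`p > 0` whose Galois group is elementary abelian of order `p^n`, with `𝔽_p`-basis
`σ₁, …, σₙ`.  Suppose `y ∈ L` and `w₁, …, wₙ ∈ K` are linearly independent over `𝔽_p`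
with `σⱼ(y) = y + wⱼ`, and let `W` be the `𝔽_p`-span of the `wⱼ`.  Then the monic
polynomial `A(X) = ∏_{a ∈ W}(X - a) - ∏_{a ∈ W}(y - a)` has coefficients in `K`, has
degree `p^n = [L : K]`, is the minimal polynomial of `y` over `K`, and `L = K(y)`. -/
theorem subspace_polynomial_minpoly
    (p : ℕ) [Fact p.Prime]
    (K L : Type*) [Field K] [Field L] [Algebra K L]
    [CharP K p] [CharP L p] [Module (ZMod p) K]
    [FiniteDimensional K L] [IsGalois K L]
    (n : ℕ) (σ : Fin n → (L ≃ₐ[K] L))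
    -- the Galois group is elementary abelian of order `p^n` …
    (hcard : Nat.card (L ≃ₐ[K] L) = p ^ n)
    (hcomm : ∀ g h : L ≃ₐ[K] L, g * h = h * g)
    (helem : ∀ g : L ≃ₐ[K] L, g ^ p = 1)
    -- … and `σ₁, …, σₙ` form an `𝔽_p`-basis of it
    (hbasis : Function.Bijective
      (fun ν : Fin n → ZMod p => (List.ofFn fun j => σ j ^ (ν j).val).prod))
    (y : L) (w : Fin n → K) (hw : LinearIndependent (ZMod p) w)
    (hy : ∀ j, σ j y = y + algebraMap K L (w j))
    (hW : (Submodule.span (ZMod p) (Set.range w) : Set K).Finite) :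
    (∀ i : ℕ,
        (∏ a ∈ hW.toFinset, (X - C (algebraMap K L a))
            - C (∏ a ∈ hW.toFinset, (y - algebraMap K L a))).coeff i
          ∈ Set.range (algebraMap K L)) ∧
    (∏ a ∈ hW.toFinset, (X - C (algebraMap K L a))
        - C (∏ a ∈ hW.toFinset, (y - algebraMap K L a))).Monic ∧
    (∏ a ∈ hW.toFinset, (X - C (algebraMap K L a))
        - C (∏ a ∈ hW.toFinset, (y - algebraMap K L a))).natDegree = p ^ n ∧
    Module.finrank K L = p ^ n ∧
    (minpoly K y).map (algebraMap K L)
      = ∏ a ∈ hW.toFinset, (X - C (algebraMap K L a))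
          - C (∏ a ∈ hW.toFinset, (y - algebraMap K L a)) ∧
    IntermediateField.adjoin K {y} = ⊤ := by
  classical
  have hp : p.Prime := Fact.out
  have hT : ∀ ν : Fin n → ZMod p, (List.ofFn fun j => σ j ^ (ν j).val).prod y
      = y + algebraMap K L (∑ j, ν j • w j) := by
    intro ν
    refine aux_list y n _ _ fun j => ?_
    rw [aux_pow _ _ _ (hy j)]
    congr 2
    rw [← Nat.cast_smul_eq_nsmul (ZMod p), ZMod.natCast_zmod_val]
  have hinj : Function.Injective (fun ν : Fin n → ZMod p => ∑ j, ν j • w j) := by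
    intro μ ν h
    have h' : ∑ j, μ j • w j = ∑ j, ν j • w j := h
    have h0 : ∑ j, (μ j - ν j) • w j = 0 := by
      simp only [sub_smul, Finset.sum_sub_distrib, h', sub_self]
    funext j
    exact sub_eq_zero.mp (Fintype.linearIndependent_iff.mp hw _ h0 j)
  have hWeq : hW.toFinset = Finset.univ.image (fun ν : Fin n → ZMod p => ∑ j, ν j • w j) := by
    ext a
    simp [Submodule.mem_span_range_iff_exists_fun]
  have hWcard : hW.toFinset.card = p ^ n := by
    rw [hWeq, Finset.card_image_of_injective _ hinj]
    simp [ZMod.card]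
  have hg : ∀ g : L ≃ₐ[K] L, ∃ a ∈ Submodule.span (ZMod p) (Set.range w),
      g y = y + algebraMap K L a := by
    intro g
    obtain ⟨ν, rfl⟩ := hbasis.2 g
    exact ⟨_, Submodule.mem_span_range_iff_exists_fun (ZMod p) |>.mpr ⟨ν, rfl⟩, hT ν⟩
  have hstab : ∀ g : L ≃ₐ[K] L, g y = y → g = 1 := by
    intro g h
    obtain ⟨ν, rfl⟩ := hbasis.2 g
    have h1 := (hT ν).symm.trans h
    have h2 : ∑ j, ν j • w j = 0 := by
      exact (map_eq_zero (algebraMap K L)).mp (add_eq_left.mp h1)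
    have h3 : ν = 0 := hinj (by simpa using h2)
    subst h3
    simp
  have hfin : Module.finrank K L = p ^ n := by
    rw [← IsGalois.card_aut_eq_finrank, hcard]
  have htop : IntermediateField.adjoin K {y} = ⊤ := by
    rw [← IsGalois.fixedField_fixingSubgroup (IntermediateField.adjoin K {y})]
    have : (IntermediateField.adjoin K {y}).fixingSubgroup = ⊥ := by
      rw [eq_bot_iff]
      intro g h
      rw [IntermediateField.mem_fixingSubgroup_iff] at h
      exact hstab g (h y (IntermediateField.mem_adjoin_simple_self K y))
    rw [this, IntermediateField.fixedField_bot]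
  have hshift : ∀ b ∈ Submodule.span (ZMod p) (Set.range w),
      ∏ a ∈ hW.toFinset, (y + algebraMap K L b - algebraMap K L a)
        = ∏ a ∈ hW.toFinset, (y - algebraMap K L a) := by
    intro b hb
    refine Finset.prod_bij' (fun a _ => a - b) (fun a _ => a + b) ?_ ?_ ?_ ?_ ?_
    · intro a ha
      simp only [Set.Finite.mem_toFinset, SetLike.mem_coe] at ha ⊢
      exact sub_mem ha hb
    · intro a ha
      simp only [Set.Finite.mem_toFinset, SetLike.mem_coe] at ha ⊢
      exact add_mem ha hb
    · intro a _; ring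
    · intro a _; ring
    · intro a _; rw [map_sub]; ring
  obtain ⟨c, hc⟩ : ∏ a ∈ hW.toFinset, (y - algebraMap K L a) ∈ Set.range (algebraMap K L) := by
    rw [IsGalois.mem_range_algebraMap_iff_fixed]
    intro g
    obtain ⟨b, hb, hgb⟩ := hg g
    rw [map_prod, ← hshift b hb]
    refine Finset.prod_congr rfl fun a _ => ?_
    rw [map_sub, hgb, AlgEquiv.commutes]
  have hdegP : (∏ a ∈ hW.toFinset, (X - C a)).natDegree = p ^ n := by
    rw [natDegree_finsetProd_X_sub_C_eq_card, hWcard]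
  have hmonP : (∏ a ∈ hW.toFinset, (X - C a)).Monic :=
    monic_prod_X_sub_C _ _
  have hpos : 0 < p ^ n := pow_pos hp.pos n
  set B : K[X] := ∏ a ∈ hW.toFinset, (X - C a) - C c with hB
  have hBmap : ∏ a ∈ hW.toFinset, (X - C (algebraMap K L a))
      - C (∏ a ∈ hW.toFinset, (y - algebraMap K L a)) = B.map (algebraMap K L) := by
    rw [← hc, hB]
    simp [Polynomial.map_prod]
  have hBmon : B.Monic := by
    refine hmonP.sub_of_left ?_
    refine lt_of_le_of_lt degree_C_le ?_
    rw [← natDegree_pos_iff_degree_pos, hdegP]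
    exact hpos
  have hBdeg : B.natDegree = p ^ n := by
    rw [hB, natDegree_sub_C, hdegP]
  have hBy : aeval y B = 0 := by
    simp [hB, map_prod, hc]
  have hint : IsIntegral K y := IsIntegral.of_finite K y
  have hmdeg : (minpoly K y).natDegree = p ^ n := by
    rw [← IntermediateField.adjoin.finrank hint, htop, IntermediateField.finrank_top', hfin]
  have hmin : B = minpoly K y :=
    (eq_of_monic_of_dvd_of_natDegree_le (minpoly.monic hint) hBmon (minpoly.dvd K y hBy)
      (by rw [hBdeg, hmdeg]))
  rw [hBmap]
  refine ⟨fun i => ⟨B.coeff i, by rw [coeff_map]⟩, hBmon.map _, ?_, hfin, by rw [hmin], htop⟩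
  rw [natDegree_map, hBdeg]
end

section
/- Let p be a prime, i ≥ 1, and let G be a cyclic group of order p^i with generator σ. Let A be an abelian group with p·A = 0, equipped with an action of G by additive automorphisms such that σ^{p^{i−1}} acts trivially on A. Then the first group cohomology H^1(G, A) is isomorphic, as an abelian group, to the coinvariants A_G = A / {σ·a − a : a ∈ A}. -/
section Defs

variable (G : Type*) [Group G] (A : Type*) [AddCommGroup A] [DistribMulAction G A]

/-- The group of 1-cocycles `d : G → A`, i.e. functions with
`d (g * h) = d g + g • d h`. -/
def oneCocycles : AddSubgroup (G → A) where
  carrier := {d | ∀ g h : G, d (g * h) = d g + g • d h}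
  add_mem' := by
    intro d e hd he g h
    simp only [Pi.add_apply, hd g h, he g h, smul_add]
    abel
  zero_mem' := by intro g h; simp
  neg_mem' := by
    intro d hd g h
    simp only [Pi.neg_apply, hd g h, smul_neg]
    abel

/-- The group of 1-coboundaries, i.e. functions of the form `g ↦ g • b - b`. -/
def oneCoboundaries : AddSubgroup (G → A) where
  carrier := {d | ∃ b : A, ∀ g : G, d g = g • b - b}
  add_mem' := by
    rintro d e ⟨b, hb⟩ ⟨c, hc⟩
    refine ⟨b + c, fun g => ?_⟩
    simp only [Pi.add_apply, hb g, hc g, smul_add]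
    abel
  zero_mem' := ⟨0, by simp⟩
  neg_mem' := by
    rintro d ⟨b, hb⟩
    refine ⟨-b, fun g => ?_⟩
    simp only [Pi.neg_apply, hb g, smul_neg]
    abel

/-- The first group cohomology `H¹(G, A)`: 1-cocycles modulo 1-coboundaries. -/
def H1 : Type _ :=
  oneCocycles G A ⧸ (oneCoboundaries G A).addSubgroupOf (oneCocycles G A)

noncomputable instance : AddCommGroup (H1 G A) :=
  QuotientAddGroup.Quotient.addCommGroup _

/-- The coinvariants `A_G = A / ⟨g • a - a⟩`. -/
def coinvariants : Type _ :=
  A ⧸ AddSubgroup.closure {x : A | ∃ (g : G) (a : A), x = g • a - a}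

noncomputable instance : AddCommGroup (coinvariants G A) :=
  QuotientAddGroup.Quotient.addCommGroup _

end Defs

theorem aux_sum_add {G : Type*} [Group G] {A : Type*} [AddCommGroup A] [DistribMulAction G A]
    (σ : G) (a : A) (m n : ℕ) :
    ∑ j ∈ Finset.range (m + n), σ ^ j • a =
      ∑ j ∈ Finset.range m, σ ^ j • a + σ ^ m • ∑ j ∈ Finset.range n, σ ^ j • a := by
  rw [Finset.sum_range_add, Finset.smul_sum]
  simp only [pow_add, mul_smul]

theorem aux_sum_mul {G : Type*} [Group G] {A : Type*} [AddCommGroup A] [DistribMulAction G A]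
    (σ : G) (a : A) (m : ℕ) (h : ∀ a : A, σ ^ m • a = a) (n : ℕ) :
    ∑ j ∈ Finset.range (m * n), σ ^ j • a = n • ∑ j ∈ Finset.range m, σ ^ j • a := by
  induction n with
  | zero => simp
  | succ n ih =>
    rw [Nat.mul_succ, add_comm (m * n) m, aux_sum_add, h, ih, succ_nsmul, add_comm]

theorem aux_cocycle_pow {G : Type*} [Group G] {A : Type*} [AddCommGroup A] [DistribMulAction G A]
    (σ : G) (d : G → A) (hd : ∀ g h : G, d (g * h) = d g + g • d h) (n : ℕ) :
    d (σ ^ n) = ∑ j ∈ Finset.range n, σ ^ j • d σ := by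
  induction n with
  | zero =>
    have := hd 1 1
    simpa using this
  | succ n ih => rw [pow_succ, hd, ih, Finset.sum_range_succ]

/-- Let `p` be a prime, `i ≥ 1`, and `G` cyclic of order `p^i` with
generator `σ`.  Let `A` be an abelian group with `p • A = 0` and a `G`-action by
additive automorphisms such that `σ^(p^(i-1))` acts trivially.  Then
`H¹(G, A) ≅ A_G` (the coinvariants) as abelian groups. -/
theorem H1_iso_coinvariants
    (p i : ℕ) [Fact p.Prime] (hi : 1 ≤ i)
    (G : Type*) [Group G] (σ : G)
    (hord : orderOf σ = p ^ i) (hgen : ∀ g : G, g ∈ Subgroup.zpowers σ)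
    (A : Type*) [AddCommGroup A] [DistribMulAction G A]
    (hpA : ∀ a : A, p • a = 0)
    (htriv : ∀ a : A, σ ^ p ^ (i - 1) • a = a) :
    Nonempty (H1 G A ≃+ coinvariants G A) := by
  have hp : 0 < p := (Fact.out : p.Prime).pos
  have hN : 0 < p ^ i := pow_pos hp i
  have hpow : ∀ g : G, ∃ k : ℕ, σ ^ k = g := by
    intro g
    have hf : IsOfFinOrder σ := orderOf_pos_iff.1 (by rw [hord]; exact hN)
    exact Submonoid.mem_powers_iff _ _ |>.1 (hf.mem_powers_iff_mem_zpowers.2 (hgen g))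
  choose k hk using hpow
  have hσN : σ ^ p ^ i = 1 := by rw [← hord]; exact pow_orderOf_eq_one σ
  have hS0 : ∀ a : A, ∑ j ∈ Finset.range (p ^ i), σ ^ j • a = 0 := by
    intro a
    have : p ^ i = p ^ (i - 1) * p := by rw [← pow_succ, Nat.sub_add_cancel hi]
    rw [this, aux_sum_mul σ a _ htriv, hpA]
  have hmod : ∀ (a : A) (m : ℕ), ∑ j ∈ Finset.range m, σ ^ j • a =
      ∑ j ∈ Finset.range (m % p ^ i), σ ^ j • a := by
    intro a m
    conv_lhs => rw [← Nat.mod_add_div m (p ^ i)]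
    rw [aux_sum_add, aux_sum_mul σ a _ (by intro a; rw [hσN, one_smul]), hS0]
    simp
  have hwd : ∀ (a : A) (m n : ℕ), σ ^ m = σ ^ n →
      ∑ j ∈ Finset.range m, σ ^ j • a = ∑ j ∈ Finset.range n, σ ^ j • a := by
    intro a m n h
    have h2 : m % p ^ i = n % p ^ i := by
      have := pow_eq_pow_iff_modEq.1 h
      rw [hord] at this
      exact this
    rw [hmod a m, hmod a n, h2]
  let C := AddSubgroup.closure {x : A | ∃ (g : G) (a : A), x = g • a - a}
  have hC : ∀ x ∈ C, ∃ b : A, x = σ • b - b := by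
    intro x hx
    induction hx using AddSubgroup.closure_induction with
    | mem x hx =>
      obtain ⟨g, a, rfl⟩ := hx
      refine ⟨∑ j ∈ Finset.range (k g), σ ^ j • a, ?_⟩
      have h1 := aux_sum_add σ a 1 (k g)
      have h2 := aux_sum_add σ a (k g) 1
      rw [add_comm (k g) 1, h1] at h2
      simp only [Finset.sum_range_one, pow_zero, one_smul, pow_one, hk] at h2
      rw [sub_eq_sub_iff_add_eq_add, add_comm, ← h2, add_comm]
    | zero => exact ⟨0, by simp⟩
    | add x y _ _ hx hy =>
      obtain ⟨b, rfl⟩ := hx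
      obtain ⟨c, rfl⟩ := hy
      exact ⟨b + c, by rw [smul_add]; abel⟩
    | neg x _ hx =>
      obtain ⟨b, rfl⟩ := hx
      exact ⟨-b, by rw [smul_neg]; abel⟩
  let φ : oneCocycles G A →+ A ⧸ C :=
    (QuotientAddGroup.mk' C).comp
      ((Pi.evalAddMonoidHom (fun _ : G => A) σ).comp (oneCocycles G A).subtype)
  have hφ : ∀ d : oneCocycles G A, φ d = QuotientAddGroup.mk' C (d.1 σ) := fun _ => rfl
  have hsurj : Function.Surjective φ := by
    intro q
    obtain ⟨a, rfl⟩ := QuotientAddGroup.mk'_surjective C q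
    refine ⟨⟨fun g => ∑ j ∈ Finset.range (k g), σ ^ j • a, ?_⟩, ?_⟩
    · intro g h
      show ∑ j ∈ Finset.range (k (g * h)), σ ^ j • a = ∑ j ∈ Finset.range (k g), σ ^ j • a +
        g • ∑ j ∈ Finset.range (k h), σ ^ j • a
      rw [hwd a (k (g * h)) (k g + k h) (by rw [pow_add, hk, hk, hk]), aux_sum_add, hk]
    · rw [hφ]
      show QuotientAddGroup.mk' C (∑ j ∈ Finset.range (k σ), σ ^ j • a) = _
      rw [hwd a (k σ) 1 (by rw [hk, pow_one])]
      simp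
  have hker : (oneCoboundaries G A).addSubgroupOf (oneCocycles G A) = φ.ker := by
    ext d
    rw [AddSubgroup.mem_addSubgroupOf, AddMonoidHom.mem_ker, hφ, QuotientAddGroup.mk'_apply,
      QuotientAddGroup.eq_zero_iff]
    constructor
    · rintro ⟨b, hb⟩
      exact AddSubgroup.subset_closure ⟨σ, b, hb σ⟩
    · intro h
      obtain ⟨b, hb⟩ := hC _ h
      refine ⟨b, fun g => ?_⟩
      rw [← hk g]
      show d.1 _ = _
      rw [aux_cocycle_pow σ d.1 d.2, hb]
      simp only [smul_sub, ← mul_smul, ← pow_succ]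
      rw [Finset.sum_range_sub (fun j => σ ^ j • b), pow_zero, one_smul]
  exact ⟨(QuotientAddGroup.quotientAddEquivOfEq hker).trans
    (QuotientAddGroup.quotientKerEquivOfSurjective φ hsurj)⟩
end
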